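/- arXiv:math/0505647 — 2 statements merged into one kernel-verified Lean document; each statement's English description precedes it below -/
import Mathlib

section
/- T(4,3,2) = (\pi^4/90)\zeta(5) + (\pi^2/6)\zeta(7) - (5/2)\zeta(9). -/
/-- The Tornheim double series with natural number exponents. -/
noncomputable def tornheimN (a b c : ℕ) : ℝ :=
  ∑' n : ℕ+, ∑' m : ℕ+,
    1 / (((n : ℕ) : ℝ) ^ a * ((m : ℕ) : ℝ) ^ b * (((n : ℕ) + (m : ℕ) : ℕ) : ℝ) ^ c)

open scoped ENNReal

/-- The general term of the Tornheim series, indexed from zero. -/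
noncomputable def tornheimTerm (a b c n m : ℕ) : ℝ :=
  1 / (((n : ℝ) + 1) ^ a * ((m : ℝ) + 1) ^ b * ((n : ℝ) + m + 2) ^ c)

/-- The Tornheim series with values in the extended nonnegative reals. -/
noncomputable def tornheimE (a b c : ℕ) : ℝ≥0∞ :=
  ∑' n : ℕ, ∑' m : ℕ, ENNReal.ofReal (tornheimTerm a b c n m)

/-- The zeta series with values in the extended nonnegative reals. -/
noncomputable def zetaE (a : ℕ) : ℝ≥0∞ :=
  ∑' n : ℕ, ENNReal.ofReal (1 / ((n : ℝ) + 1) ^ a)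

lemma tornheimTerm_nonneg (a b c n m : ℕ) : 0 ≤ tornheimTerm a b c n m := by
  unfold tornheimTerm
  positivity

lemma tornheimTerm_succ_succ (a b c n m : ℕ) :
    tornheimTerm (a + 1) (b + 1) c n m
      = tornheimTerm a (b + 1) (c + 1) n m + tornheimTerm (a + 1) b (c + 1) n m := by
  unfold tornheimTerm
  have h₁ : (n : ℝ) + 1 ≠ 0 := by positivity
  have h₂ : (m : ℝ) + 1 ≠ 0 := by positivity
  have h₃ : (n : ℝ) + m + 2 ≠ 0 := by positivity
  field_simp
  ring

lemma tornheimE_succ_succ (a b c : ℕ) :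
    tornheimE (a + 1) (b + 1) c
      = tornheimE a (b + 1) (c + 1) + tornheimE (a + 1) b (c + 1) := by
  simp only [tornheimE, ← ENNReal.tsum_add, tornheimTerm_succ_succ,
    ENNReal.ofReal_add (tornheimTerm_nonneg _ _ _ _ _) (tornheimTerm_nonneg _ _ _ _ _)]

lemma tornheimE_comm (a b c : ℕ) : tornheimE a b c = tornheimE b a c := by
  unfold tornheimE
  rw [ENNReal.tsum_comm]
  refine tsum_congr fun n => tsum_congr fun m => congrArg _ ?_
  unfold tornheimTerm
  rw [mul_comm (((m : ℝ) + 1) ^ a), add_comm (m : ℝ) n]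

lemma tornheimE_zero_succ (b c : ℕ) : tornheimE 0 (b + 1) c = tornheimE (b + 1) 0 c :=
  tornheimE_comm _ _ _

lemma zetaE_mul (a b : ℕ) :
    zetaE a * zetaE b
      = ∑' n : ℕ, ∑' m : ℕ, ENNReal.ofReal (1 / (((n : ℝ) + 1) ^ a * ((m : ℝ) + 1) ^ b)) := by
  unfold zetaE
  rw [← ENNReal.tsum_mul_right]
  refine tsum_congr fun n => ?_
  rw [← ENNReal.tsum_mul_left]
  refine tsum_congr fun m => ?_
  rw [← ENNReal.ofReal_mul (by positivity), one_div_mul_one_div]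

lemma tornheimE_zero_right (a b : ℕ) : tornheimE a b 0 = zetaE a * zetaE b := by
  rw [zetaE_mul]
  simp [tornheimE, tornheimTerm]

lemma ENNReal.tsum_ite_lt (g : ℕ → ℝ≥0∞) (n : ℕ) :
    ∑' m, (if n < m then g m else 0) = ∑' k, g (n + k + 1) := by
  rw [← ENNReal.summable.sum_add_tsum_nat_add' (k := n + 1), Finset.sum_eq_zero, zero_add]
  · refine tsum_congr fun k => ?_
    rw [if_pos (by omega)]
    congr 1
    omega
  · intro i hi
    rw [Finset.mem_range] at hi
    rw [if_neg (by omega)]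

lemma ENNReal.tsum_nat_nat_eq_diag_add (f : ℕ → ℕ → ℝ≥0∞) :
    ∑' n, ∑' m, f n m
      = ∑' n, f n n + ∑' n, ∑' k, f n (n + k + 1) + ∑' m, ∑' k, f (m + k + 1) m := by
  have h₁ : ∑' n, ∑' k, f n (n + k + 1) = ∑' n, ∑' m, if n < m then f n m else 0 :=
    tsum_congr fun n => (ENNReal.tsum_ite_lt (f n) n).symm
  have h₂ : ∑' m, ∑' k, f (m + k + 1) m = ∑' n, ∑' m, if m < n then f n m else 0 := by
    rw [ENNReal.tsum_comm (f := fun n m => if m < n then f n m else 0)]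
    exact tsum_congr fun m => (ENNReal.tsum_ite_lt (fun n => f n m) m).symm
  have h₃ : ∑' n, f n n = ∑' n, ∑' m, if m = n then f n m else 0 :=
    tsum_congr fun n => by rw [tsum_ite_eq]
  rw [h₁, h₂, h₃, ← ENNReal.tsum_add, ← ENNReal.tsum_add]
  refine tsum_congr fun n => ?_
  rw [← ENNReal.tsum_add, ← ENNReal.tsum_add]
  refine tsum_congr fun m => ?_
  rcases lt_trichotomy n m with h | h | h
  · simp [h, h.ne', h.not_gt]
  · simp [h]
  · simp [h, h.ne, h.not_gt]

/-- The stuffle product of two zeta series. -/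
lemma zetaE_mul_eq_stuffle (a b : ℕ) :
    zetaE a * zetaE b = zetaE (a + b) + tornheimE a 0 b + tornheimE b 0 a := by
  rw [zetaE_mul, ENNReal.tsum_nat_nat_eq_diag_add]
  unfold zetaE tornheimE tornheimTerm
  congr 1
  · congr 1
    · simp only [pow_add]
    · refine tsum_congr fun n => tsum_congr fun k => congrArg _ ?_
      push_cast
      ring
  · refine tsum_congr fun n => tsum_congr fun k => congrArg _ ?_
    push_cast
    ring

lemma hasSum_one_div_sub_one_div_succ (r : ℕ) :
    HasSum (fun m : ℕ => 1 / ((m : ℝ) + r + 1) - 1 / ((m : ℝ) + r + 2)) (1 / ((r : ℝ) + 1)) := by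
  rw [hasSum_iff_tendsto_nat_of_nonneg]
  · have h (N : ℕ) : ∑ m ∈ Finset.range N, (1 / ((m : ℝ) + r + 1) - 1 / ((m : ℝ) + r + 2))
        = 1 / ((r : ℝ) + 1) - 1 / (((N + r : ℕ) : ℝ) + 1) := by
      have := Finset.sum_range_sub' (fun m : ℕ => 1 / ((m : ℝ) + r + 1)) N
      push_cast at this ⊢
      rw [zero_add] at this
      rw [← this]
      refine Finset.sum_congr rfl fun m _ => ?_
      ring
    simp only [h]
    have := ((tendsto_one_div_add_atTop_nhds_zero_nat (𝕜 := ℝ)).comp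
      (Filter.tendsto_add_atTop_nat r)).const_sub (1 / ((r : ℝ) + 1))
    simpa [Function.comp_def] using this
  · intro m
    rw [sub_nonneg]
    gcongr
    norm_num

lemma hasSum_one_div_sub_one_div_add (r : ℕ) :
    HasSum (fun m : ℕ => 1 / ((m : ℝ) + 1) - 1 / ((m : ℝ) + r + 1))
      (∑ k ∈ Finset.range r, 1 / ((k : ℝ) + 1)) := by
  induction r with
  | zero => simp
  | succ r ih =>
    rw [Finset.sum_range_succ]
    convert ih.add (hasSum_one_div_sub_one_div_succ r) using 2 with m
    push_cast
    ring

/-- The regularized double shuffle relation between the stuffle and shuffle products with `ζ(1)`. -/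
lemma tornheimE_one_one (a : ℕ) :
    tornheimE a 1 1 = zetaE (a + 2) + tornheimE 1 0 (a + 1) := by
  have inner (n : ℕ) : ∑' m : ℕ, ENNReal.ofReal (tornheimTerm a 1 1 n m)
      = ∑' k : ℕ, if k < n + 1 then
          ENNReal.ofReal (1 / (((n : ℝ) + 1) ^ (a + 1) * ((k : ℝ) + 1))) else 0 := by
    have hs : HasSum (tornheimTerm a 1 1 n)
        (1 / ((n : ℝ) + 1) ^ (a + 1) * ∑ k ∈ Finset.range (n + 1), 1 / ((k : ℝ) + 1)) := by
      have h := (hasSum_one_div_sub_one_div_add (n + 1)).mul_left (1 / ((n : ℝ) + 1) ^ (a + 1))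
      refine (funext fun m => ?_ : tornheimTerm a 1 1 n = _) ▸ h
      unfold tornheimTerm
      push_cast
      have h₁ : (n : ℝ) + 1 ≠ 0 := by positivity
      have h₂ : (m : ℝ) + 1 ≠ 0 := by positivity
      have h₃ : (n : ℝ) + m + 2 ≠ 0 := by positivity
      have h₄ : (m : ℝ) + (n + 1) + 1 ≠ 0 := by positivity
      field_simp
      ring
    rw [← ENNReal.ofReal_tsum_of_nonneg (tornheimTerm_nonneg _ _ _ _) hs.summable, hs.tsum_eq,
      tsum_eq_sum (s := Finset.range (n + 1)), Finset.mul_sum, ENNReal.ofReal_sum_of_nonneg]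
    · refine Finset.sum_congr rfl fun k hk => ?_
      rw [if_pos (Finset.mem_range.1 hk), one_div_mul_one_div]
    · intros
      positivity
    · intro k hk
      rw [if_neg (by simpa using hk)]
  unfold tornheimE
  simp only [inner]
  rw [ENNReal.tsum_nat_nat_eq_diag_add]
  have hz (n k : ℕ) : ¬ n + k + 1 < n + 1 := by omega
  have hp (n k : ℕ) : n < n + k + 1 + 1 := by omega
  simp only [hz, hp, if_true, if_false, tsum_zero, add_zero, lt_add_one]
  unfold zetaE tornheimTerm
  congr 1
  refine tsum_congr fun n => tsum_congr fun k => congrArg _ ?_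
  push_cast
  ring

lemma summable_one_div_nat_add_one_pow {a : ℕ} (ha : 1 < a) :
    Summable fun n : ℕ => 1 / ((n : ℝ) + 1) ^ a := by
  simpa using (summable_nat_add_iff 1).2 (Real.summable_one_div_nat_pow.2 ha)

lemma zetaE_ne_top {a : ℕ} (ha : 1 < a) : zetaE a ≠ ∞ :=
  (summable_one_div_nat_add_one_pow ha).tsum_ofReal_ne_top

lemma ofReal_toReal_zetaE {a : ℕ} (ha : 1 < a) :
    (((zetaE a).toReal : ℝ) : ℂ) = riemannZeta a := by
  unfold zetaE
  rw [ENNReal.tsum_toReal_eq fun _ => ENNReal.ofReal_ne_top, Complex.ofReal_tsum,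
    zeta_eq_tsum_one_div_nat_add_one_cpow (by simpa using ha)]
  refine tsum_congr fun n => ?_
  rw [ENNReal.toReal_ofReal (by positivity), Complex.cpow_natCast]
  push_cast
  rfl

lemma tornheimN_eq_toReal {a b c : ℕ} (h : tornheimE a b c ≠ ∞) :
    tornheimN a b c = (tornheimE a b c).toReal := by
  unfold tornheimE at h ⊢
  rw [ENNReal.tsum_toReal_eq (ENNReal.ne_top_of_tsum_ne_top h)]
  unfold tornheimN
  rw [tsum_pnat_eq_tsum_succ (f := fun n : ℕ => ∑' m : ℕ+,
    1 / ((n : ℝ) ^ a * ((m : ℕ) : ℝ) ^ b * ((n + (m : ℕ) : ℕ) : ℝ) ^ c))]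
  refine tsum_congr fun n => ?_
  rw [tsum_pnat_eq_tsum_succ (f := fun m : ℕ =>
    1 / (((n + 1 : ℕ) : ℝ) ^ a * (m : ℝ) ^ b * ((n + 1 + m : ℕ) : ℝ) ^ c)),
    ENNReal.tsum_toReal_eq fun _ => ENNReal.ofReal_ne_top]
  refine tsum_congr fun m => ?_
  rw [ENNReal.toReal_ofReal (tornheimTerm_nonneg _ _ _ _ _)]
  unfold tornheimTerm
  push_cast
  ring

lemma toReal_tornheimE_four_three_two :
    tornheimE 4 3 2 ≠ ∞ ∧ (tornheimE 4 3 2).toReal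
      = (zetaE 4).toReal * (zetaE 5).toReal + (zetaE 2).toReal * (zetaE 7).toReal
        - 5 / 2 * (zetaE 9).toReal := by
  have sh27 := tornheimE_zero_right 2 7
  have sh36 := tornheimE_zero_right 3 6
  have sh45 := tornheimE_zero_right 4 5
  have st27 := zetaE_mul_eq_stuffle 2 7
  have st36 := zetaE_mul_eq_stuffle 3 6
  have st45 := zetaE_mul_eq_stuffle 4 5
  have reg := tornheimE_one_one 7
  have f2 := zetaE_ne_top (a := 2) (by norm_num)
  have f3 := zetaE_ne_top (a := 3) (by norm_num)
  have f4 := zetaE_ne_top (a := 4) (by norm_num)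
  have f5 := zetaE_ne_top (a := 5) (by norm_num)
  have f6 := zetaE_ne_top (a := 6) (by norm_num)
  have f7 := zetaE_ne_top (a := 7) (by norm_num)
  have f9 := zetaE_ne_top (a := 9) (by norm_num)
  simp only [tornheimE_succ_succ, tornheimE_zero_succ, Nat.reduceAdd, zero_add]
    at sh27 sh36 sh45 st27 st36 st45 reg ⊢
  have hp27 := ENNReal.mul_ne_top f2 f7
  have hp36 := ENNReal.mul_ne_top f3 f6
  have hp45 := ENNReal.mul_ne_top f4 f5
  rw [← ENNReal.toReal_mul, ← ENNReal.toReal_mul]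
  generalize zetaE 2 * zetaE 7 = p27 at *
  generalize zetaE 3 * zetaE 6 = p36 at *
  generalize zetaE 4 * zetaE 5 = p45 at *
  have g1 : tornheimE 1 0 8 ≠ ∞ := fun h => by simp [h] at sh27; exact hp27 sh27.symm
  have g2 : tornheimE 2 0 7 ≠ ∞ := fun h => by simp [h] at st27; exact hp27 st27
  have g7 : tornheimE 7 0 2 ≠ ∞ := fun h => by simp [h] at st27; exact hp27 st27
  have g3 : tornheimE 3 0 6 ≠ ∞ := fun h => by simp [h] at st36; exact hp36 st36
  have g6 : tornheimE 6 0 3 ≠ ∞ := fun h => by simp [h] at st36; exact hp36 st36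
  have g4 : tornheimE 4 0 5 ≠ ∞ := fun h => by simp [h] at st45; exact hp45 st45
  have g5 : tornheimE 5 0 4 ≠ ∞ := fun h => by simp [h] at st45; exact hp45 st45
  generalize tornheimE 1 0 8 = z1 at *
  generalize tornheimE 2 0 7 = z2 at *
  generalize tornheimE 3 0 6 = z3 at *
  generalize tornheimE 4 0 5 = z4 at *
  generalize tornheimE 5 0 4 = z5 at *
  generalize tornheimE 6 0 3 = z6 at *
  generalize tornheimE 7 0 2 = z7 at *
  generalize zetaE 9 = z9 at *
  lift z1 to NNReal using g1
  lift z2 to NNReal using g2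
  lift z3 to NNReal using g3
  lift z4 to NNReal using g4
  lift z5 to NNReal using g5
  lift z6 to NNReal using g6
  lift z7 to NNReal using g7
  lift z9 to NNReal using f9
  lift p27 to NNReal using hp27
  lift p36 to NNReal using hp36
  lift p45 to NNReal using hp45
  norm_cast at sh27 sh36 sh45 st27 st36 st45 reg
  refine ⟨by norm_cast; exact ENNReal.coe_ne_top, ?_⟩
  simp only [← ENNReal.coe_add, ENNReal.coe_toReal]
  rw [← NNReal.coe_inj] at sh27 sh36 sh45 st27 st36 st45 reg
  push_cast at sh27 sh36 sh45 st27 st36 st45 reg ⊢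
  linarith

theorem tornheim_432 :
    ((tornheimN 4 3 2 : ℝ) : ℂ)
      = ((Real.pi : ℂ) ^ 4 / 90) * riemannZeta 5
        + ((Real.pi : ℂ) ^ 2 / 6) * riemannZeta 7 - (5 / 2) * riemannZeta 9 := by
  have h := toReal_tornheimE_four_three_two
  rw [tornheimN_eq_toReal h.1, h.2, ← riemannZeta_two, ← riemannZeta_four]
  push_cast
  rw [ofReal_toReal_zetaE (by norm_num), ofReal_toReal_zetaE (by norm_num),
    ofReal_toReal_zetaE (by norm_num), ofReal_toReal_zetaE (by norm_num),
    ofReal_toReal_zetaE (by norm_num)]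
  push_cast
  rfl
end

section
/- For positive even integers n1, n2, n3, the symmetrized Tornheim sum satisfies T(n1,n2,n3) + T(n2,n3,n1) + T(n3,n1,n2) = (-1)^{(n1+n2+n3)/2} \frac{(2\pi)^{n1+n2+n3}}{2 (n1-1)!(n2-1)!(n3-1)!} \cdot \frac{-1}{n1 n2 n3} \int_0^1 B_{n1}(q) B_{n2}(q) B_{n3}(q) dq. -/
open MeasureTheory

/-- The integral over a period of `cos (2πmx)`. -/
lemma integral_cos_two_pi_int_mul (m : ℤ) :
    ∫ x in (0:ℝ)..1, Real.cos (2 * Real.pi * m * x) = if m = 0 then 1 else 0 := by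
  split_ifs with h
  · simp [h]
  · have h0 : (2 * Real.pi * m : ℝ) ≠ 0 := by positivity
    rw [intervalIntegral.integral_comp_mul_left _ h0, integral_cos]
    have : Real.sin (2 * Real.pi * m) = 0 := by
      rw [show 2 * Real.pi * (m : ℝ) = ((2 * m : ℤ) : ℝ) * Real.pi by push_cast; ring]
      exact Real.sin_int_mul_pi _
    simp [this]

lemma integral_cos_mul_cos_mul_cos (a b c : ℕ+) :
    ∫ x in (0:ℝ)..1, Real.cos (2 * Real.pi * (a : ℕ) * x) * Real.cos (2 * Real.pi * (b : ℕ) * x)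
        * Real.cos (2 * Real.pi * (c : ℕ) * x)
      = 1 / 4 * ((if a + b = c then 1 else 0) + (if b + c = a then 1 else 0)
        + (if c + a = b then 1 else 0)) := by
  have key (x : ℝ) : Real.cos (2 * Real.pi * (a : ℕ) * x) * Real.cos (2 * Real.pi * (b : ℕ) * x)
        * Real.cos (2 * Real.pi * (c : ℕ) * x)
      = 1 / 4 * (Real.cos (2 * Real.pi * ((a + b + c : ℤ) : ℝ) * x)
        + Real.cos (2 * Real.pi * ((a + b - c : ℤ) : ℝ) * x)
        + Real.cos (2 * Real.pi * ((b + c - a : ℤ) : ℝ) * x)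
        + Real.cos (2 * Real.pi * ((c + a - b : ℤ) : ℝ) * x)) := by
    push_cast
    simp only [mul_add, mul_sub, add_mul, sub_mul, Real.cos_add, Real.cos_sub, Real.sin_add]
    ring
  have ii (m : ℤ) : IntervalIntegrable (fun x : ℝ => Real.cos (2 * Real.pi * m * x)) volume 0 1 :=
    Continuous.intervalIntegrable (by fun_prop) _ _
  simp_rw [key]
  rw [intervalIntegral.integral_const_mul,
    intervalIntegral.integral_add (((ii _).add (ii _)).add (ii _)) (ii _),
    intervalIntegral.integral_add ((ii _).add (ii _)) (ii _),
    intervalIntegral.integral_add (ii _) (ii _)]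
  simp only [integral_cos_two_pi_int_mul]
  have h0 : ¬ ((a : ℤ) + b + c = 0) := by have := a.pos; omega
  have h1 : ((a : ℤ) + b - c = 0) ↔ a + b = c := by
    rw [← PNat.coe_inj, PNat.add_coe]; omega
  have h2 : ((b : ℤ) + c - a = 0) ↔ b + c = a := by
    rw [← PNat.coe_inj, PNat.add_coe]; omega
  have h3 : ((c : ℤ) + a - b = 0) ↔ c + a = b := by
    rw [← PNat.coe_inj, PNat.add_coe]; omega
  simp only [h0, h1, h2, h3, if_false, zero_add]

lemma hasSum_pnat_cos_div_pow {k : ℕ} (hk : 0 < k) (ek : Even k) {x : ℝ}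
    (hx : x ∈ Set.Icc (0 : ℝ) 1) :
    HasSum (fun n : ℕ+ => 1 / ((n : ℕ) : ℝ) ^ k * Real.cos (2 * Real.pi * (n : ℕ) * x))
      ((-1 : ℝ) ^ (k / 2 + 1) * (2 * Real.pi) ^ k / 2 / (Nat.factorial k) *
        Polynomial.aeval x (Polynomial.bernoulli k)) := by
  obtain ⟨j, rfl⟩ := even_iff_exists_two_mul.mp ek
  have h := hasSum_one_div_nat_pow_mul_cos (k := j) (by omega) hx
  rw [Polynomial.eval_map_algebraMap] at h
  rw [Nat.mul_div_cancel_left _ two_pos]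
  refine (PNat.coe_injective.hasSum_iff ?_).mpr h
  intro n hn
  have : n = 0 := by
    by_contra h0
    exact hn ⟨⟨n, Nat.pos_of_ne_zero h0⟩, rfl⟩
  subst this
  simp [hk.ne']

lemma summable_pnat_one_div_pow {k : ℕ} (hk : 0 < k) (ek : Even k) :
    Summable fun n : ℕ+ => 1 / ((n : ℕ) : ℝ) ^ k := by
  obtain ⟨j, rfl⟩ := even_iff_exists_two_mul.mp ek
  exact (Real.summable_one_div_nat_pow.mpr (by omega)).comp_injective PNat.coe_injective

/-- A sum of a summable weight over the image of an injective map, with the iterated sum on the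
parameter side. -/
lemma hasSum_ite_of_injective {W : ℕ+ × ℕ+ × ℕ+ → ℝ} (hW : Summable W)
    {P : ℕ+ × ℕ+ × ℕ+ → Prop} [DecidablePred P] {e : ℕ+ × ℕ+ → ℕ+ × ℕ+ × ℕ+}
    (he : Function.Injective e) (hP : ∀ p, P p ↔ p ∈ Set.range e) :
    HasSum (fun p => W p * if P p then 1 else 0) (∑' n, ∑' m, W (e (n, m))) := by
  have hs : Summable (W ∘ e) := hW.comp_injective he
  have h := hs.hasSum
  rw [hs.tsum_prod] at h
  refine (he.hasSum_iff fun p hp => by simp [hP, hp]).mp ?_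
  have hcomp : (fun p => W p * if P p then 1 else 0) ∘ e = W ∘ e := by
    ext q
    simp [hP]
  rw [hcomp]
  exact h

/-- The general term of the product of three Dirichlet series. -/
noncomputable def tripleWeight (a b c : ℕ) (p : ℕ+ × ℕ+ × ℕ+) : ℝ :=
  1 / ((p.1 : ℕ) : ℝ) ^ a * (1 / ((p.2.1 : ℕ) : ℝ) ^ b * (1 / ((p.2.2 : ℕ) : ℝ) ^ c))

lemma tripleWeight_nonneg (a b c : ℕ) (p : ℕ+ × ℕ+ × ℕ+) : 0 ≤ tripleWeight a b c p := by
  unfold tripleWeight; positivity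

lemma summable_tripleWeight {a b c : ℕ} (ha : 0 < a) (hb : 0 < b) (hc : 0 < c)
    (ea : Even a) (eb : Even b) (ec : Even c) : Summable (tripleWeight a b c) := by
  refine (summable_pnat_one_div_pow ha ea).mul_of_nonneg
    ((summable_pnat_one_div_pow hb eb).mul_of_nonneg (summable_pnat_one_div_pow hc ec) ?_ ?_) ?_ ?_
  all_goals intro; simp only [Pi.zero_apply]; positivity

lemma hasSum_tripleWeight_mul_ite {a b c : ℕ} (ha : 0 < a) (hb : 0 < b) (hc : 0 < c)
    (ea : Even a) (eb : Even b) (ec : Even c) :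
    HasSum (fun p : ℕ+ × ℕ+ × ℕ+ => tripleWeight a b c p *
        (1 / 4 * ((if p.1 + p.2.1 = p.2.2 then 1 else 0) + (if p.2.1 + p.2.2 = p.1 then 1 else 0)
          + (if p.2.2 + p.1 = p.2.1 then 1 else 0))))
      (1 / 4 * (tornheimN a b c + tornheimN b c a + tornheimN c a b)) := by
  have hW := summable_tripleWeight ha hb hc ea eb ec
  have H1 := hasSum_ite_of_injective hW (P := fun p => p.1 + p.2.1 = p.2.2)
    (e := fun q => (q.1, q.2, q.1 + q.2)) (fun q r h => by simp_all [Prod.ext_iff])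
    (fun p => ⟨fun h => ⟨(p.1, p.2.1), by simp [h]⟩, by rintro ⟨q, rfl⟩; rfl⟩)
  have H2 := hasSum_ite_of_injective hW (P := fun p => p.2.1 + p.2.2 = p.1)
    (e := fun q => (q.1 + q.2, q.1, q.2)) (fun q r h => by simp_all [Prod.ext_iff])
    (fun p => ⟨fun h => ⟨(p.2.1, p.2.2), by simp [h]⟩, by rintro ⟨q, rfl⟩; rfl⟩)
  have H3 := hasSum_ite_of_injective hW (P := fun p => p.2.2 + p.1 = p.2.1)
    (e := fun q => (q.2, q.1 + q.2, q.1)) (fun q r h => by simp_all [Prod.ext_iff])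
    (fun p => ⟨fun h => ⟨(p.2.2, p.1), by simp [h]⟩, by rintro ⟨q, rfl⟩; rfl⟩)
  have T1 : ∑' n, ∑' m, tripleWeight a b c (n, m, n + m) = tornheimN a b c := by
    simp only [tripleWeight, tornheimN, one_div, mul_inv, PNat.add_coe, mul_assoc]
  have T2 : ∑' n, ∑' m, tripleWeight a b c (n + m, n, m) = tornheimN b c a := by
    simp only [tripleWeight, tornheimN, one_div, mul_inv, PNat.add_coe]
    exact tsum_congr fun n => tsum_congr fun m => by ring
  have T3 : ∑' n, ∑' m, tripleWeight a b c (m, n + m, n) = tornheimN c a b := by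
    simp only [tripleWeight, tornheimN, one_div, mul_inv, PNat.add_coe]
    exact tsum_congr fun n => tsum_congr fun m => by ring
  rw [T1] at H1
  rw [T2] at H2
  rw [T3] at H3
  have H := ((H1.add H2).add H3).mul_left (1 / 4)
  simp only [← mul_add, mul_left_comm (1 / 4 : ℝ)] at H
  exact H

lemma HasSum.mul_real {ι κ : Type*} {f : ι → ℝ} {g : κ → ℝ} {s t : ℝ} (hf : HasSum f s)
    (hg : HasSum g t) : HasSum (fun p : ι × κ => f p.1 * g p.2) (s * t) :=
  hf.mul hg (summable_mul_of_summable_norm hf.summable.norm hg.summable.norm)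

lemma hasSum_integral_tripleWeight_mul_cos {a b c : ℕ} (ha : 0 < a) (hb : 0 < b) (hc : 0 < c)
    (ea : Even a) (eb : Even b) (ec : Even c) {A B C : ℝ → ℝ}
    (hA : ∀ x ∈ Set.Icc (0 : ℝ) 1,
      HasSum (fun n : ℕ+ => 1 / ((n : ℕ) : ℝ) ^ a * Real.cos (2 * Real.pi * (n : ℕ) * x)) (A x))
    (hB : ∀ x ∈ Set.Icc (0 : ℝ) 1,
      HasSum (fun n : ℕ+ => 1 / ((n : ℕ) : ℝ) ^ b * Real.cos (2 * Real.pi * (n : ℕ) * x)) (B x))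
    (hC : ∀ x ∈ Set.Icc (0 : ℝ) 1,
      HasSum (fun n : ℕ+ => 1 / ((n : ℕ) : ℝ) ^ c * Real.cos (2 * Real.pi * (n : ℕ) * x)) (C x)) :
    HasSum (fun p : ℕ+ × ℕ+ × ℕ+ => ∫ x in (0:ℝ)..1, tripleWeight a b c p *
        (Real.cos (2 * Real.pi * (p.1 : ℕ) * x) * Real.cos (2 * Real.pi * (p.2.1 : ℕ) * x)
          * Real.cos (2 * Real.pi * (p.2.2 : ℕ) * x)))
      (∫ x in (0:ℝ)..1, A x * (B x * C x)) := by
  have hW := summable_tripleWeight ha hb hc ea eb ec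
  refine intervalIntegral.hasSum_integral_of_dominated_convergence
    (fun p _ => tripleWeight a b c p) (fun p => ?_) (fun p => ?_) ?_ (by simp) ?_
  · exact Continuous.aestronglyMeasurable (by fun_prop)
  · refine Filter.Eventually.of_forall fun x _ => ?_
    rw [norm_mul, Real.norm_of_nonneg (tripleWeight_nonneg _ _ _ _), norm_mul, norm_mul]
    refine mul_le_of_le_one_right (tripleWeight_nonneg _ _ _ _) ?_
    exact mul_le_one₀ (mul_le_one₀ (Real.abs_cos_le_one _) (norm_nonneg _) (Real.abs_cos_le_one _))
      (norm_nonneg _) (Real.abs_cos_le_one _)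
  · exact Filter.Eventually.of_forall fun _ _ => hW
  · refine Filter.Eventually.of_forall fun x hx => ?_
    rw [Set.uIoc_of_le zero_le_one] at hx
    have hx' := Set.Ioc_subset_Icc_self hx
    have hABC := (hA x hx').mul_real ((hB x hx').mul_real (hC x hx'))
    have hterm (p : ℕ+ × ℕ+ × ℕ+) : tripleWeight a b c p *
        (Real.cos (2 * Real.pi * (p.1 : ℕ) * x) * Real.cos (2 * Real.pi * (p.2.1 : ℕ) * x)
          * Real.cos (2 * Real.pi * (p.2.2 : ℕ) * x))
        = 1 / ((p.1 : ℕ) : ℝ) ^ a * Real.cos (2 * Real.pi * (p.1 : ℕ) * x)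
          * (1 / ((p.2.1 : ℕ) : ℝ) ^ b * Real.cos (2 * Real.pi * (p.2.1 : ℕ) * x)
            * (1 / ((p.2.2 : ℕ) : ℝ) ^ c * Real.cos (2 * Real.pi * (p.2.2 : ℕ) * x))) := by
      simp only [tripleWeight]
      ring
    simp only [hterm]
    exact hABC

theorem tornheim_sym_even (n1 n2 n3 : ℕ) (h1 : 0 < n1) (h2 : 0 < n2) (h3 : 0 < n3)
    (e1 : Even n1) (e2 : Even n2) (e3 : Even n3) :
    tornheimN n1 n2 n3 + tornheimN n2 n3 n1 + tornheimN n3 n1 n2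
      = (-1) ^ ((n1 + n2 + n3) / 2)
          * ((2 * Real.pi) ^ (n1 + n2 + n3)
              / (2 * (Nat.factorial (n1 - 1) : ℝ) * (Nat.factorial (n2 - 1) : ℝ)
                  * (Nat.factorial (n3 - 1) : ℝ)))
          * (-1 / ((n1 : ℝ) * (n2 : ℝ) * (n3 : ℝ)))
          * ∫ q in (0:ℝ)..1,
              (Polynomial.aeval q (Polynomial.bernoulli n1))
                * (Polynomial.aeval q (Polynomial.bernoulli n2))
                * (Polynomial.aeval q (Polynomial.bernoulli n3)) := by
  have H := hasSum_integral_tripleWeight_mul_cos h1 h2 h3 e1 e2 e3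
    (fun x hx => hasSum_pnat_cos_div_pow h1 e1 hx) (fun x hx => hasSum_pnat_cos_div_pow h2 e2 hx)
    (fun x hx => hasSum_pnat_cos_div_pow h3 e3 hx)
  simp only [intervalIntegral.integral_const_mul, integral_cos_mul_cos_mul_cos] at H
  have key := (hasSum_tripleWeight_mul_ite h1 h2 h3 e1 e2 e3).unique H
  have hI (u v w : ℝ) (f g h : ℝ → ℝ) : ∫ x in (0:ℝ)..1, u * f x * (v * g x * (w * h x))
      = u * v * w * ∫ x in (0:ℝ)..1, f x * g x * h x := by
    rw [← intervalIntegral.integral_const_mul]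
    exact intervalIntegral.integral_congr fun x _ => by ring
  rw [hI] at key
  have fac (n : ℕ) (hn : 0 < n) : (n.factorial : ℝ) = n * (n - 1).factorial := by
    exact_mod_cast (Nat.mul_factorial_pred hn.ne').symm
  rw [fac n1 h1, fac n2 h2, fac n3 h3] at key
  have hn1 : (n1 : ℝ) ≠ 0 := by positivity
  have hn2 : (n2 : ℝ) ≠ 0 := by positivity
  have hn3 : (n3 : ℝ) ≠ 0 := by positivity
  have hs : (n1 + n2 + n3) / 2 = n1 / 2 + n2 / 2 + n3 / 2 := by grind
  rw [hs]
  have key' := congrArg (fun z : ℝ => 4 * z) key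
  rw [← mul_assoc, mul_one_div_cancel four_ne_zero, one_mul] at key'
  rw [key']
  simp only [pow_add]
  field_simp
  ring
end
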